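/- Let L be a directed encoding for the directed degree sequence ᵈ with exactly p 2-defect arcs and exactly q (−1)-defect arcs, and let a_1, b_1, a_2, b_2 ∈ [n] be four distinct vertices with L(a_1, b_1) ≠ 0 and L(a_2, b_2) = 1. Define η* = η_{a_1}^- + η_{b_1}^+ + η_{a_2}^- + η_{b_2}^+ and ζ* = ζ_{a_1}^- + ζ_{b_1}^+ + ζ_{a_2}^- + ζ_{b_2}^+. Then the number of ordered pairs of vertices (a_3, b_3) such that L(a_3, b_3) = 1, L(a_1, b_3) = L(a_3, b_2) = 0, and a_1, b_1, a_2, b_2, a_3, b_3 are all distinct is at least m − 2p + q − ( r_max·( 2·r_max − (ζ_{a_1}^+ + ζ_{b_2}^-) + 2·(η_{a_1}^+ + η_{b_2}^-) + 4 ) + η* − 2·ζ* + Σ_{x ∈ N̂_L^+(a_1)} (η_x^- − 2·ζ_x^-) + Σ_{y ∈ N̂_L^-(b_2)} (η_y^+ − 2·ζ_y^+) ). -/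

import Mathlib

/-!
An encoding has `m - 2p + q` arcs labelled `1`, since each 2-defect arc is counted twice in `m` and
each (−1)-defect arc is subtracted; in the same way `d⁻_v - 2ζ⁻_v + η⁻_v` of them have head `v`,
and `v` has `d⁺_v - ζ⁺_v + 2η⁺_v` out-neighbours along nonzero labels. The other two semi-degree
counts follow by transposing the matrix.

An arc `(a₃, b₃)` labelled `1` is inadmissible only if `b₃ ∈ N̂⁺(a₁) ∪ {a₁, a₂}` or
`a₃ ∈ N̂⁻(b₂) ∪ {b₁, b₂}`: the coincidences `b₃ = b₁` and `a₃ = a₁` put `b₃` into `N̂⁺(a₁)`, while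
`a₃ = a₂` and `b₃ = b₂` put `a₃` into `N̂⁻(b₂)`. The union bound over these heads and tails, with
each semi-degree bounded by `r_max`, is the claimed inequality.
-/

open scoped Classical

noncomputable section

namespace DirectedSwitchChain

variable {n : ℕ}

/-- A directed encoding for the directed degree sequence `(dm, dp)`: an integer
matrix with zero diagonal, entries in `{-1, 0, 1, 2}`, row sums `dp` and column
sums `dm`. -/
def IsDirEncoding (dm dp : Fin n → ℕ) (L : Matrix (Fin n) (Fin n) ℤ) : Prop :=
  (∀ i, L i i = 0) ∧
  (∀ i j, L i j = -1 ∨ L i j = 0 ∨ L i j = 1 ∨ L i j = 2) ∧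
  (∀ j, ∑ k, L j k = (dp j : ℤ)) ∧
  (∀ j, ∑ k, L k j = (dm j : ℤ))

/-- `N⁺_L(v)`: out-neighbours of `v` along arcs labelled `1`. -/
def nbrOut (L : Matrix (Fin n) (Fin n) ℤ) (v : Fin n) : Set (Fin n) :=
  {w | w ≠ v ∧ L v w = 1}

/-- `N⁻_L(v)`: in-neighbours of `v` along arcs labelled `1`. -/
def nbrIn (L : Matrix (Fin n) (Fin n) ℤ) (v : Fin n) : Set (Fin n) :=
  {w | w ≠ v ∧ L w v = 1}

/-- `N̂⁺_L(v)`: all out-neighbours of `v` (along arcs with nonzero label). -/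
def nbrOutHat (L : Matrix (Fin n) (Fin n) ℤ) (v : Fin n) : Set (Fin n) :=
  {w | w ≠ v ∧ L v w ≠ 0}

/-- `N̂⁻_L(v)`: all in-neighbours of `v` (along arcs with nonzero label). -/
def nbrInHat (L : Matrix (Fin n) (Fin n) ℤ) (v : Fin n) : Set (Fin n) :=
  {w | w ≠ v ∧ L w v ≠ 0}

/-- `ζ⁺_v`: the number of 2-defect arcs with tail `v`. -/
def zetaOut (L : Matrix (Fin n) (Fin n) ℤ) (v : Fin n) : ℕ :=
  {w | w ≠ v ∧ L v w = 2}.ncard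

/-- `ζ⁻_v`: the number of 2-defect arcs with head `v`. -/
def zetaIn (L : Matrix (Fin n) (Fin n) ℤ) (v : Fin n) : ℕ :=
  {w | w ≠ v ∧ L w v = 2}.ncard

/-- `η⁺_v`: the number of (−1)-defect arcs with tail `v`. -/
def etaOut (L : Matrix (Fin n) (Fin n) ℤ) (v : Fin n) : ℕ :=
  {w | w ≠ v ∧ L v w = -1}.ncard

/-- `η⁻_v`: the number of (−1)-defect arcs with head `v`. -/
def etaIn (L : Matrix (Fin n) (Fin n) ℤ) (v : Fin n) : ℕ :=
  {w | w ≠ v ∧ L w v = -1}.ncard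


/-- The set of (ordered) arcs of `L` carrying the label `c`. -/
def labelArcs (L : Matrix (Fin n) (Fin n) ℤ) (c : ℤ) : Set (Fin n × Fin n) :=
  {ab | ab.1 ≠ ab.2 ∧ L ab.1 ab.2 = c}

/-- The maximum semi-degree. -/
def rmax (dm dp : Fin n → ℕ) : ℕ := Finset.univ.sup fun j => max (dm j) (dp j)

section Counting

variable {α β : Type*}

theorem ncard_setOf_eq_sum_ite [Fintype α] (P : α → Prop) :
    ({x | P x}.ncard : ℤ) = ∑ x, if P x then 1 else 0 := by
  rw [Set.ncard_eq_toFinset_card', Finset.sum_boole, Set.toFinset_ofPred]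

theorem ncard_eq_sum_ncard_fiber_snd [Finite α] [Fintype β] (E : Set (α × β)) :
    E.ncard = ∑ v, {w | (w, v) ∈ E}.ncard := by
  cases nonempty_fintype α
  have hE : (E.ncard : ℤ) = ∑ e, if e ∈ E then 1 else 0 := ncard_setOf_eq_sum_ite (· ∈ E)
  zify
  simp only [hE, ncard_setOf_eq_sum_ite, Fintype.sum_prod_type_right]

theorem ncard_le_ncard_avoiding_add [Finite α] [Finite β] (E : Set (α × β)) (T : Finset α)
    (S : Finset β) :
    E.ncard ≤ {e ∈ E | e.1 ∉ T ∧ e.2 ∉ S}.ncard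
      + (∑ v ∈ S, {w | (w, v) ∈ E}.ncard + ∑ w ∈ T, {v | (w, v) ∈ E}.ncard) := by
  have hcover : E ⊆ {e ∈ E | e.1 ∉ T ∧ e.2 ∉ S} ∪
      ((⋃ v ∈ S, (·, v) '' {w | (w, v) ∈ E}) ∪ ⋃ w ∈ T, (w, ·) '' {v | (w, v) ∈ E}) := by
    rintro ⟨w, v⟩ he
    by_cases hv : v ∈ S <;> by_cases hw : w ∈ T <;> simp [he, hv, hw]
  have hS : (⋃ v ∈ S, (·, v) '' {w | (w, v) ∈ E}).ncard ≤ ∑ v ∈ S, {w | (w, v) ∈ E}.ncard :=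
    (S.set_ncard_biUnion_le _).trans (Finset.sum_le_sum fun _ _ => Set.ncard_image_le)
  have hT : (⋃ w ∈ T, (w, ·) '' {v | (w, v) ∈ E}).ncard ≤ ∑ w ∈ T, {v | (w, v) ∈ E}.ncard :=
    (T.set_ncard_biUnion_le _).trans (Finset.sum_le_sum fun _ _ => Set.ncard_image_le)
  exact (Set.ncard_le_ncard hcover).trans <| (Set.ncard_union_le _ _).trans <|
    Nat.add_le_add_left ((Set.ncard_union_le _ _).trans (Nat.add_le_add hS hT)) _

theorem sum_insert_le_add {M : Type*} [AddCommMonoid M] [Preorder M] [CanonicallyOrderedAdd M]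
    [DecidableEq α] (f : α → M) (a : α) (S : Finset α) :
    ∑ x ∈ insert a S, f x ≤ f a + ∑ x ∈ S, f x := by
  by_cases ha : a ∈ S
  · rw [Finset.insert_eq_of_mem ha]
    exact le_add_self
  · rw [Finset.sum_insert ha]

end Counting

/-- The heads excluded for a third arc: the out-neighbours of `a` along nonzero labels, `a` itself,
and `a'`. The excluded tails are obtained by applying this to the transposed matrix. -/
def excludedHeads (L : Matrix (Fin n) (Fin n) ℤ) (a a' : Fin n) : Finset (Fin n) :=
  insert a (insert a' (Finset.univ.filter (· ∈ nbrOutHat L a)))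

theorem notMem_excludedHeads {L : Matrix (Fin n) (Fin n) ℤ} {a a' v : Fin n} :
    v ∉ excludedHeads L a a' ↔ v ≠ a ∧ v ≠ a' ∧ L a v = 0 := by
  have hmem : v ∈ nbrOutHat L a ↔ v ≠ a ∧ L a v ≠ 0 := Iff.rfl
  simp only [excludedHeads, Finset.mem_insert, Finset.mem_filter_univ, hmem]
  tauto

/-- The admissible choices of a third arc `(a₃, b₃)` labelled `1`, given `a₁, b₁, a₂, b₂`. -/
def thirdArcs (L : Matrix (Fin n) (Fin n) ℤ) (a1 b1 a2 b2 : Fin n) : Set (Fin n × Fin n) :=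
  {ab | L ab.1 ab.2 = 1 ∧ L a1 ab.2 = 0 ∧ L ab.1 b2 = 0 ∧
    ab.1 ≠ a1 ∧ ab.1 ≠ b1 ∧ ab.1 ≠ a2 ∧ ab.1 ≠ b2 ∧
    ab.2 ≠ a1 ∧ ab.2 ≠ b1 ∧ ab.2 ≠ a2 ∧ ab.2 ≠ b2 ∧ ab.1 ≠ ab.2}

theorem labelArcs_avoiding_subset_thirdArcs {L : Matrix (Fin n) (Fin n) ℤ}
    {a1 b1 a2 b2 : Fin n} (h1 : L a1 b1 ≠ 0) (h2 : L a2 b2 ≠ 0) :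
    {e ∈ labelArcs L 1 | e.1 ∉ excludedHeads L.transpose b2 b1 ∧ e.2 ∉ excludedHeads L a1 a2}
      ⊆ thirdArcs L a1 b1 a2 b2 := by
  rintro ⟨a3, b3⟩ ⟨⟨hne, hone⟩, htail, hhead⟩
  dsimp only at hne hone htail hhead
  obtain ⟨ha3b2, ha3b1, hL32 : L a3 b2 = 0⟩ := notMem_excludedHeads.1 htail
  obtain ⟨hb3a1, hb3a2, hL13⟩ := notMem_excludedHeads.1 hhead
  have ha3a1 : a3 ≠ a1 := by rintro rfl; simp [hone] at hL13
  have hb3b1 : b3 ≠ b1 := by rintro rfl; exact h1 hL13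
  have ha3a2 : a3 ≠ a2 := by rintro rfl; exact h2 hL32
  have hb3b2 : b3 ≠ b2 := by rintro rfl; simp [hone] at hL32
  exact ⟨hone, hL13, hL32, ha3a1, ha3b1, ha3a2, ha3b2, hb3a1, hb3b1, hb3a2, hb3b2, hne⟩

theorem ncard_labelArcs_one_le {L : Matrix (Fin n) (Fin n) ℤ} {a1 b1 a2 b2 : Fin n}
    (h1 : L a1 b1 ≠ 0) (h2 : L a2 b2 ≠ 0) :
    (labelArcs L 1).ncard ≤ (thirdArcs L a1 b1 a2 b2).ncard
      + (∑ v ∈ excludedHeads L a1 a2, (nbrIn L v).ncard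
        + ∑ w ∈ excludedHeads L.transpose b2 b1, (nbrOut L w).ncard) := by
  have hfiber (w : Fin n) : {v | (w, v) ∈ labelArcs L 1} = nbrOut L w :=
    Set.ext fun _ => and_congr_left fun _ => ne_comm
  simp only [← hfiber]
  exact (ncard_le_ncard_avoiding_add _ _ _).trans <| Nat.add_le_add_right
    (Set.ncard_le_ncard (labelArcs_avoiding_subset_thirdArcs h1 h2)) _

theorem le_rmax_left (dm dp : Fin n → ℕ) (v : Fin n) : dm v ≤ rmax dm dp :=
  (le_max_left _ _).trans
    (Finset.le_sup (f := fun j => max (dm j) (dp j)) (Finset.mem_univ v))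

theorem le_rmax_right (dm dp : Fin n → ℕ) (v : Fin n) : dp v ≤ rmax dm dp :=
  (le_max_right _ _).trans
    (Finset.le_sup (f := fun j => max (dm j) (dp j)) (Finset.mem_univ v))

namespace IsDirEncoding

variable {dm dp : Fin n → ℕ} {L : Matrix (Fin n) (Fin n) ℤ}

theorem transpose (hL : IsDirEncoding dm dp L) : IsDirEncoding dp dm L.transpose :=
  ⟨hL.1, fun i j => hL.2.1 j i, hL.2.2.2, hL.2.2.1⟩

theorem ncard_nbrIn (hL : IsDirEncoding dm dp L) (v : Fin n) :
    ((nbrIn L v).ncard : ℤ) = dm v - 2 * zetaIn L v + etaIn L v := by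
  simp only [← hL.2.2.2 v, nbrIn, zetaIn, etaIn, ncard_setOf_eq_sum_ite, Finset.mul_sum,
    ← Finset.sum_sub_distrib, ← Finset.sum_add_distrib]
  refine Finset.sum_congr rfl fun w _ => ?_
  by_cases hw : w = v
  · simp [hw, hL.1]
  · rcases hL.2.1 w v with h | h | h | h <;> simp [h, hw]

theorem ncard_nbrOutHat (hL : IsDirEncoding dm dp L) (v : Fin n) :
    ((nbrOutHat L v).ncard : ℤ) = dp v - zetaOut L v + 2 * etaOut L v := by
  simp only [← hL.2.2.1 v, nbrOutHat, zetaOut, etaOut, ncard_setOf_eq_sum_ite, Finset.mul_sum,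
    ← Finset.sum_sub_distrib, ← Finset.sum_add_distrib]
  refine Finset.sum_congr rfl fun w _ => ?_
  by_cases hw : w = v
  · simp [hw, hL.1]
  · rcases hL.2.1 v w with h | h | h | h <;> simp [h, hw]

theorem ncard_labelArcs_one (hL : IsDirEncoding dm dp L) :
    ((labelArcs L 1).ncard : ℤ)
      = (∑ j, dm j : ℕ) - 2 * (labelArcs L 2).ncard + (labelArcs L (-1)).ncard := by
  have hone : (labelArcs L 1).ncard = ∑ v, (nbrIn L v).ncard := ncard_eq_sum_ncard_fiber_snd _
  have htwo : (labelArcs L 2).ncard = ∑ v, zetaIn L v := ncard_eq_sum_ncard_fiber_snd _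
  have hneg : (labelArcs L (-1)).ncard = ∑ v, etaIn L v := ncard_eq_sum_ncard_fiber_snd _
  rw [hone, htwo, hneg]
  push_cast
  simp only [hL.ncard_nbrIn, Finset.mul_sum, Finset.sum_sub_distrib, Finset.sum_add_distrib]

theorem sum_ncard_nbrIn_le (hL : IsDirEncoding dm dp L) {R : ℕ} (hdm : ∀ v, dm v ≤ R)
    (S : Finset (Fin n)) :
    ∑ v ∈ S, ((nbrIn L v).ncard : ℤ)
      ≤ R * S.card + ∑ v ∈ S, ((etaIn L v : ℤ) - 2 * zetaIn L v) := by
  rw [mul_comm, ← nsmul_eq_mul, ← Finset.sum_const, ← Finset.sum_add_distrib]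
  refine Finset.sum_le_sum fun v _ => ?_
  have hv : (dm v : ℤ) ≤ R := mod_cast hdm v
  linarith [hL.ncard_nbrIn v]

theorem sum_ncard_nbrIn_excludedHeads_le (hL : IsDirEncoding dm dp L) {R : ℕ}
    (hdm : ∀ v, dm v ≤ R) (hdp : ∀ v, dp v ≤ R) (a a' : Fin n) :
    ∑ v ∈ excludedHeads L a a', ((nbrIn L v).ncard : ℤ)
      ≤ R * (R - zetaOut L a + 2 * etaOut L a + 2)
        + (etaIn L a - 2 * zetaIn L a) + (etaIn L a' - 2 * zetaIn L a')
        + ∑ x ∈ Finset.univ.filter (· ∈ nbrOutHat L a), ((etaIn L x : ℤ) - 2 * zetaIn L x) := by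
  set A := Finset.univ.filter (· ∈ nbrOutHat L a) with hA
  have hsplit : ∑ v ∈ excludedHeads L a a', ((nbrIn L v).ncard : ℤ)
      ≤ (nbrIn L a).ncard + ((nbrIn L a').ncard + ∑ v ∈ A, ((nbrIn L v).ncard : ℤ)) :=
    mod_cast (sum_insert_le_add _ a (insert a' A)).trans
      (Nat.add_le_add_left (sum_insert_le_add _ a' A) _)
  have hcard : (A.card : ℤ) ≤ R - zetaOut L a + 2 * etaOut L a := by
    have hAcard : A.card = (nbrOutHat L a).ncard := by
      rw [← Set.ncard_coe_finset, hA, Finset.coe_filter_univ, Set.ofPred_mem_eq]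
    have hda : (dp a : ℤ) ≤ R := mod_cast hdp a
    linarith [hL.ncard_nbrOutHat a]
  have hmul : (R : ℤ) * A.card ≤ R * (R - zetaOut L a + 2 * etaOut L a) :=
    mul_le_mul_of_nonneg_left hcard R.cast_nonneg
  have hda : (dm a : ℤ) ≤ R := mod_cast hdm a
  have hda' : (dm a' : ℤ) ≤ R := mod_cast hdm a'
  linarith [hL.ncard_nbrIn a, hL.ncard_nbrIn a', hL.sum_ncard_nbrIn_le hdm A]

end IsDirEncoding

theorem dir_choose_third_arc_lower_bound_general {dm dp : Fin n → ℕ}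
    {L : Matrix (Fin n) (Fin n) ℤ} (hL : IsDirEncoding dm dp L) {R : ℕ}
    (hdm : ∀ v, dm v ≤ R) (hdp : ∀ v, dp v ≤ R) {a1 b1 a2 b2 : Fin n}
    (h1 : L a1 b1 ≠ 0) (h2 : L a2 b2 ≠ 0) :
    ((∑ j, dm j : ℕ) : ℤ) - 2 * (labelArcs L 2).ncard + (labelArcs L (-1)).ncard -
        ((R : ℤ) *
            (2 * (R : ℤ) - ((zetaOut L a1 : ℤ) + zetaIn L b2)
              + 2 * ((etaOut L a1 : ℤ) + etaIn L b2) + 4)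
          + ((etaIn L a1 : ℤ) + etaOut L b1 + etaIn L a2 + etaOut L b2)
          - 2 * ((zetaIn L a1 : ℤ) + zetaOut L b1 + zetaIn L a2 + zetaOut L b2)
          + ∑ x ∈ Finset.univ.filter (· ∈ nbrOutHat L a1),
              ((etaIn L x : ℤ) - 2 * zetaIn L x)
          + ∑ y ∈ Finset.univ.filter (· ∈ nbrInHat L b2),
              ((etaOut L y : ℤ) - 2 * zetaOut L y)) ≤
      ((thirdArcs L a1 b1 a2 b2).ncard : ℤ) := by
  have hunion : ((labelArcs L 1).ncard : ℤ) ≤ (thirdArcs L a1 b1 a2 b2).ncard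
      + (∑ v ∈ excludedHeads L a1 a2, ((nbrIn L v).ncard : ℤ)
        + ∑ w ∈ excludedHeads L.transpose b2 b1, ((nbrOut L w).ncard : ℤ)) :=
    mod_cast ncard_labelArcs_one_le h1 h2
  have hheads := hL.sum_ncard_nbrIn_excludedHeads_le hdm hdp a1 a2
  have htails : ∑ w ∈ excludedHeads L.transpose b2 b1, ((nbrOut L w).ncard : ℤ)
      ≤ R * (R - zetaIn L b2 + 2 * etaIn L b2 + 2)
        + (etaOut L b2 - 2 * zetaOut L b2) + (etaOut L b1 - 2 * zetaOut L b1)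
        + ∑ y ∈ Finset.univ.filter (· ∈ nbrInHat L b2), ((etaOut L y : ℤ) - 2 * zetaOut L y) :=
    hL.transpose.sum_ncard_nbrIn_excludedHeads_le hdp hdm b2 b1
  linarith [hL.ncard_labelArcs_one]

/-- Lower bound on the number of ordered pairs `(a₃, b₃)` with `L(a₃,b₃) = 1`,
`L(a₁,b₃) = L(a₃,b₂) = 0` and `a₁, b₁, a₂, b₂, a₃, b₃` all distinct. -/
theorem dir_choose_third_arc_lower_bound
    (dm dp : Fin n → ℕ) (hsum : ∑ j, dm j = ∑ j, dp j)
    (L : Matrix (Fin n) (Fin n) ℤ) (hL : IsDirEncoding dm dp L)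
    (p q : ℕ)
    (hp : (labelArcs L 2).ncard = p)
    (hq : (labelArcs L (-1)).ncard = q)
    (a1 b1 a2 b2 : Fin n)
    (hdist : a1 ≠ b1 ∧ a1 ≠ a2 ∧ a1 ≠ b2 ∧ b1 ≠ a2 ∧ b1 ≠ b2 ∧ a2 ≠ b2)
    (hL1 : L a1 b1 ≠ 0) (hL2 : L a2 b2 = 1) :
    ((∑ j, dm j : ℕ) : ℤ) - 2 * p + q -
        ((rmax dm dp : ℤ) *
            (2 * (rmax dm dp : ℤ) - ((zetaOut L a1 : ℤ) + zetaIn L b2)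
              + 2 * ((etaOut L a1 : ℤ) + etaIn L b2) + 4)
          + ((etaIn L a1 : ℤ) + etaOut L b1 + etaIn L a2 + etaOut L b2)
          - 2 * ((zetaIn L a1 : ℤ) + zetaOut L b1 + zetaIn L a2 + zetaOut L b2)
          + ∑ x ∈ Finset.univ.filter (· ∈ nbrOutHat L a1),
              ((etaIn L x : ℤ) - 2 * zetaIn L x)
          + ∑ y ∈ Finset.univ.filter (· ∈ nbrInHat L b2),
              ((etaOut L y : ℤ) - 2 * zetaOut L y)) ≤
      ({ab : Fin n × Fin n |
          L ab.1 ab.2 = 1 ∧ L a1 ab.2 = 0 ∧ L ab.1 b2 = 0 ∧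
          ab.1 ≠ a1 ∧ ab.1 ≠ b1 ∧ ab.1 ≠ a2 ∧ ab.1 ≠ b2 ∧
          ab.2 ≠ a1 ∧ ab.2 ≠ b1 ∧ ab.2 ≠ a2 ∧ ab.2 ≠ b2 ∧ ab.1 ≠ ab.2}.ncard : ℤ) := by
  subst hp hq
  exact dir_choose_third_arc_lower_bound_general hL (le_rmax_left dm dp) (le_rmax_right dm dp)
    hL1 (by simp [hL2])

end DirectedSwitchChain
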